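/- There exists a constant C > 0, uniform in λ ≥ 1, such that for every u in the Schwartz space 𝒮(ℝ, ℂ⁴): ‖Du‖² + λ²‖gu‖² ≤ C(‖H₀u‖² + ‖u‖²). -/

import Mathlib

noncomputable section

open MeasureTheory

abbrev V4 : Type := EuclideanSpace ℂ (Fin 4)

/-- A `4 × 4` complex matrix acting on `ℂ⁴` as a continuous linear map. -/
def Mop (A : Matrix (Fin 4) (Fin 4) ℂ) : V4 →L[ℂ] V4 := Matrix.toEuclideanCLM (𝕜 := ℂ) A

/-- The `L²` inner product `⟨u, v⟩ = ∫ ⟨u(x), v(x)⟩ dx` (conjugate-linear in the first slot). -/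
def L2inner (u v : ℝ → V4) : ℂ := ∫ x : ℝ, (inner ℂ (u x) (v x) : ℂ)

/-- The `L²` norm `‖u‖ = (∫ ‖u(x)‖² dx)^{1/2}`. -/
def L2norm (u : ℝ → V4) : ℝ := Real.sqrt (∫ x : ℝ, ‖u x‖ ^ 2)

/-- The operator `D = −i d/dx`. -/
def Dop (u : ℝ → V4) : ℝ → V4 := fun x => (-Complex.I) • deriv u x

/-- The per-mode free Dirac Hamiltonian `H₀u = Γ¹Du + λgΓ²u + fu`. -/
def H0op (Γ1 Γ2 : Matrix (Fin 4) (Fin 4) ℂ) (g f : ℝ → ℝ) (lam : ℝ) (u : ℝ → V4) : ℝ → V4 :=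
  fun x => Mop Γ1 (Dop u x) + (lam * g x) • Mop Γ2 (u x) + f x • u x

/-- The operator `Qu = −u'' + λ²g²u`. -/
def Qop (g : ℝ → ℝ) (lam : ℝ) (u : ℝ → V4) : ℝ → V4 :=
  fun x => -(deriv (deriv u) x) + (lam ^ 2 * g x ^ 2) • u x

/-- The comparison operator `Nu = Qu + (1 + x²)u`. -/
def Nop (g : ℝ → ℝ) (lam : ℝ) (u : ℝ → V4) : ℝ → V4 :=
  fun x => Qop g lam u x + (1 + x ^ 2) • u x

lemma Mop_symm {A : Matrix (Fin 4) (Fin 4) ℂ} (h : A.IsHermitian) (v w : V4) :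
    inner ℂ (Mop A v) w = inner ℂ v (Mop A w) := by
  have h1 : ContinuousLinearMap.adjoint (Mop A) = Mop A := by
    unfold Mop
    rw [← ContinuousLinearMap.star_eq_adjoint, ← map_star]
    congr 1
  conv_rhs => rw [← h1]
  rw [ContinuousLinearMap.adjoint_inner_right]

lemma Mop_mul (A B : Matrix (Fin 4) (Fin 4) ℂ) (v : V4) :
    Mop A (Mop B v) = Mop (A * B) v := by
  unfold Mop
  rw [map_mul]
  rfl

lemma Mop_norm {A : Matrix (Fin 4) (Fin 4) ℂ} (h : A.IsHermitian) (h2 : A * A = 1) (v : V4) :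
    ‖Mop A v‖ = ‖v‖ := by
  have h3 : inner ℂ (Mop A v) (Mop A v) = inner ℂ v v := by
    rw [Mop_symm h, Mop_mul, h2]
    unfold Mop
    simp
  rw [@norm_eq_sqrt_re_inner ℂ, @norm_eq_sqrt_re_inner ℂ _ _ _ _ v, h3]

/-- the real bilinear form `Re ⟨-iΓ¹v, Γ²w⟩`. -/
def bform (Γ1 Γ2 : Matrix (Fin 4) (Fin 4) ℂ) (v w : V4) : ℝ :=
  (inner ℂ ((-Complex.I) • Mop Γ1 v) (Mop Γ2 w) : ℂ).re

lemma bform_symm {Γ1 Γ2 : Matrix (Fin 4) (Fin 4) ℂ}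
    (h1 : Γ1.IsHermitian) (h2 : Γ2.IsHermitian) (hanti : Γ1 * Γ2 + Γ2 * Γ1 = 0) (v w : V4) :
    bform Γ1 Γ2 v w = bform Γ1 Γ2 w v := by
  unfold bform
  have e : Γ1 * Γ2 = -(Γ2 * Γ1) := eq_neg_of_add_eq_zero_left hanti
  have k : ∀ v w : V4, inner ℂ (Mop Γ1 v) (Mop Γ2 w) = - inner ℂ (Mop Γ2 v) (Mop Γ1 w) := by
    intro v w
    rw [Mop_symm h1, Mop_symm h2, Mop_mul, Mop_mul, e]
    unfold Mop
    simp
  have k2 := k v w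
  rw [← inner_conj_symm (Mop Γ2 v) (Mop Γ1 w)] at k2
  rw [inner_smul_left, inner_smul_left, k2]
  generalize (inner ℂ (Mop Γ1 w) (Mop Γ2 v) : ℂ) = z
  simp

lemma bform_abs {Γ1 Γ2 : Matrix (Fin 4) (Fin 4) ℂ}
    (h1 : Γ1.IsHermitian) (h2 : Γ2.IsHermitian) (h1s : Γ1 * Γ1 = 1) (h2s : Γ2 * Γ2 = 1)
    (v w : V4) : |bform Γ1 Γ2 v w| ≤ ‖v‖ * ‖w‖ := by
  unfold bform
  refine (Complex.abs_re_le_norm _).trans ((norm_inner_le_norm _ _).trans ?_)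
  rw [norm_smul, Mop_norm h1 h1s, Mop_norm h2 h2s]
  simp

lemma bform_continuous {Γ1 Γ2 : Matrix (Fin 4) (Fin 4) ℂ} {v w : ℝ → V4}
    (hv : Continuous v) (hw : Continuous w) : Continuous fun x => bform Γ1 Γ2 (v x) (w x) := by
  unfold bform
  fun_prop

lemma bform_deriv {Γ1 Γ2 : Matrix (Fin 4) (Fin 4) ℂ}
    (h1 : Γ1.IsHermitian) (h2 : Γ2.IsHermitian) (hanti : Γ1 * Γ2 + Γ2 * Γ1 = 0)
    {u : ℝ → V4} {u' : V4} {x : ℝ} (hu : HasDerivAt u u' x) :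
    HasDerivAt (fun x => bform Γ1 Γ2 (u x) (u x)) (2 * bform Γ1 Γ2 u' (u x)) x := by
  have ha : HasDerivAt (fun x => (-Complex.I) • Mop Γ1 (u x)) ((-Complex.I) • Mop Γ1 u') x :=
    (((Mop Γ1).restrictScalars ℝ).hasFDerivAt.comp_hasDerivAt x hu).const_smul (-Complex.I)
  have hb : HasDerivAt (fun x => Mop Γ2 (u x)) (Mop Γ2 u') x :=
    ((Mop Γ2).restrictScalars ℝ).hasFDerivAt.comp_hasDerivAt x hu
  have hc := ha.inner ℂ hb
  have hd := Complex.reCLM.hasFDerivAt.comp_hasDerivAt x hc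
  refine hd.congr_deriv ?_
  have := bform_symm h1 h2 hanti (u x) u'
  simp only [bform] at this
  simp only [bform, Complex.reCLM_apply, Complex.add_re]
  linarith

lemma pointwise_est {Γ1 Γ2 : Matrix (Fin 4) (Fin 4) ℂ}
    (h1 : Γ1.IsHermitian) (h2 : Γ2.IsHermitian) (h1s : Γ1 * Γ1 = 1) (h2s : Γ2 * Γ2 = 1)
    (v v' : V4) (g g' f lam Cg Mf : ℝ) (hlam : 0 ≤ lam) (hg : |g'| ≤ Cg * |g|) (hf : |f| ≤ Mf) :
    ‖(-Complex.I) • v'‖ ^ 2 + lam ^ 2 * ‖g • v‖ ^ 2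
      + 2 * lam * (g' * bform Γ1 Γ2 v v + g * (2 * bform Γ1 Γ2 v' v)) ≤
    (4 + 4 * Mf ^ 2 + Cg ^ 2) *
      (‖Mop Γ1 ((-Complex.I) • v') + (lam * g) • Mop Γ2 v + f • v‖ ^ 2 + ‖v‖ ^ 2) := by
  set a := Mop Γ1 ((-Complex.I) • v') with ha
  set b := (lam * g) • Mop Γ2 v with hb
  have na : ‖a‖ = ‖v'‖ := by rw [ha, Mop_norm h1 h1s, norm_smul]; simp
  have nb : ‖b‖ ^ 2 = lam ^ 2 * g ^ 2 * ‖v‖ ^ 2 := by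
    rw [hb, norm_smul, Mop_norm h2 h2s, mul_pow, Real.norm_eq_abs, sq_abs]; ring
  have nab : ‖a + b‖ ^ 2 = ‖v'‖ ^ 2 + lam ^ 2 * g ^ 2 * ‖v‖ ^ 2
      + 2 * (lam * g) * bform Γ1 Γ2 v' v := by
    rw [@norm_add_sq ℂ, na, nb]
    have : RCLike.re (inner ℂ a b) = (lam * g) * bform Γ1 Γ2 v' v := by
      rw [ha, hb, map_smul, ← Complex.coe_smul, inner_smul_right]
      simp [bform]
    rw [this]; ring
  have nw : ‖a + b‖ ^ 2 ≤ 2 * ‖a + b + f • v‖ ^ 2 + 2 * Mf ^ 2 * ‖v‖ ^ 2 := by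
    have t : ‖a + b‖ ≤ ‖a + b + f • v‖ + Mf * ‖v‖ := by
      have := norm_sub_le (a + b + f • v) (f • v)
      rw [add_sub_cancel_right, norm_smul, Real.norm_eq_abs] at this
      have := mul_le_mul_of_nonneg_right hf (norm_nonneg v)
      linarith
    have t2 := pow_le_pow_left₀ (norm_nonneg _) t 2
    nlinarith [sq_nonneg (‖a + b + f • v‖ - Mf * ‖v‖)]
  have ng : lam * (g' * bform Γ1 Γ2 v v) ≤
      (lam ^ 2 * g ^ 2 * ‖v‖ ^ 2 + Cg ^ 2 * ‖v‖ ^ 2) / 2 := by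
    have t : g' * bform Γ1 Γ2 v v ≤ (Cg * |g|) * (‖v‖ * ‖v‖) := by
      refine (le_abs_self _).trans ?_
      rw [abs_mul]
      exact mul_le_mul hg (bform_abs h1 h2 h1s h2s v v) (abs_nonneg _) ((abs_nonneg _).trans hg)
    have t2 := mul_le_mul_of_nonneg_left t hlam
    have t3 := mul_nonneg (sq_nonneg (lam * |g| - Cg)) (sq_nonneg ‖v‖)
    have t4 := sq_abs g
    rw [← t4]
    linarith
  have e1 : ‖(-Complex.I) • v'‖ ^ 2 = ‖v'‖ ^ 2 := by rw [norm_smul]; simp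
  have e2 : ‖g • v‖ ^ 2 = g ^ 2 * ‖v‖ ^ 2 := by
    rw [norm_smul, mul_pow, Real.norm_eq_abs, sq_abs]
  rw [e1, e2]
  have p1 : 0 ≤ (4 * Mf ^ 2 + Cg ^ 2) * ‖a + b + f • v‖ ^ 2 := by positivity
  have p2 : 0 ≤ ‖v'‖ ^ 2 := by positivity
  have p3 : 0 ≤ ‖v‖ ^ 2 := by positivity
  linarith

/-- the elliptic-type estimate: there is `C > 0` uniform in `λ ≥ 1` with
`‖Du‖² + λ²‖gu‖² ≤ C(‖H₀u‖² + ‖u‖²)` for every Schwartz `u`. -/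
theorem elliptic_estimate_H0
    (Γ1 Γ2 : Matrix (Fin 4) (Fin 4) ℂ)
    (hΓ1_herm : Γ1.IsHermitian) (hΓ2_herm : Γ2.IsHermitian)
    (hΓ1_sq : Γ1 * Γ1 = 1) (hΓ2_sq : Γ2 * Γ2 = 1)
    (hanticomm : Γ1 * Γ2 + Γ2 * Γ1 = 0)
    (g : ℝ → ℝ) (hg_smooth : ContDiff ℝ (⊤ : ℕ∞) g) (Cb : ℝ) (hg_bdd : ∀ x : ℝ, |g x| ≤ Cb)
    (Cg : ℝ) (hCg : 0 < Cg) (hg' : ∀ x : ℝ, |deriv g x| ≤ Cg * |g x|)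
    (f : ℝ → ℝ) (hf_smooth : ContDiff ℝ (⊤ : ℕ∞) f)
    (Mf : ℝ) (hf_bdd : ∀ x : ℝ, |f x| ≤ Mf)
    (Mf' : ℝ) (hf'_bdd : ∀ x : ℝ, |deriv f x| ≤ Mf') :
    ∃ C : ℝ, 0 < C ∧ ∀ (u : SchwartzMap ℝ V4) (lam : ℝ), 1 ≤ lam →
      L2norm (Dop ⇑u) ^ 2 + lam ^ 2 * L2norm (fun x => g x • u x) ^ 2 ≤
        C * (L2norm (H0op Γ1 Γ2 g f lam ⇑u) ^ 2 + L2norm ⇑u ^ 2) := by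
  refine ⟨4 + 4 * Mf ^ 2 + Cg ^ 2, by positivity, fun u lam hlam => ?_⟩
  have hlam0 : 0 ≤ lam := by linarith
  have sq : ∀ v : ℝ → V4, L2norm v ^ 2 = ∫ x, ‖v x‖ ^ 2 := fun v =>
    Real.sq_sqrt (integral_nonneg fun x => by positivity)
  simp only [sq]
  have hgc := hg_smooth.continuous
  have hfc := hf_smooth.continuous
  have hgd : Differentiable ℝ g := hg_smooth.differentiable (by simp)
  have hg'c : Continuous (deriv g) := hg_smooth.continuous_deriv (by simp)
  have hud : ∀ x, HasDerivAt u (deriv u x) x := fun x => u.differentiableAt.hasDerivAt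
  have mu : MemLp u 2 := u.memLp 2
  have mu' : MemLp (deriv u) 2 := (SchwartzMap.derivCLM ℝ V4 u).memLp 2 volume
  have huc : Continuous u := u.continuous
  have hu'c : Continuous (deriv u) := (SchwartzMap.derivCLM ℝ V4 u).continuous
  have sm : ∀ (k : ℝ → ℝ) (v : ℝ → V4) (M : ℝ), Continuous k → (∀ x, |k x| ≤ M) →
      MemLp v 2 → MemLp (fun x => k x • v x) 2 := by
    intro k v M hk hM hv
    refine hv.of_le_mul (c := M) (hk.aestronglyMeasurable.smul hv.1) (.of_forall fun x => ?_)
    rw [norm_smul]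
    exact mul_le_mul_of_nonneg_right (hM x) (norm_nonneg _)
  have isq : ∀ v : ℝ → V4, MemLp v 2 → Integrable fun x => ‖v x‖ ^ 2 := fun v hv =>
    hv.integrable_norm_pow (by norm_num)
  have mD : MemLp (Dop u) 2 := mu'.const_smul (-Complex.I)
  have mg : MemLp (fun x => g x • u x) 2 := sm g u Cb hgc hg_bdd mu
  have mH : MemLp (H0op Γ1 Γ2 g f lam u) 2 := by
    have m1 : MemLp (fun x => Mop Γ1 (Dop u x)) 2 := (Mop Γ1).comp_memLp' mD
    have m2 : MemLp (fun x => (lam * g x) • Mop Γ2 (u x)) 2 := by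
      refine sm _ _ (lam * Cb) (by fun_prop) (fun x => ?_) ((Mop Γ2).comp_memLp' mu)
      rw [abs_mul, abs_of_nonneg hlam0]
      exact mul_le_mul_of_nonneg_left (hg_bdd x) hlam0
    exact (m1.add m2).add (sm f u Mf hfc hf_bdd mu)
  have iD := isq _ mD
  have ig := isq _ mg
  have iH := isq _ mH
  have iu := isq _ mu
  have iu' := isq _ mu'
  have hder : ∀ x, HasDerivAt (fun x => g x * bform Γ1 Γ2 (u x) (u x))
      (deriv g x * bform Γ1 Γ2 (u x) (u x) + g x * (2 * bform Γ1 Γ2 (deriv u x) (u x))) x :=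
    fun x => (hgd x).hasDerivAt.mul (bform_deriv hΓ1_herm hΓ2_herm hanticomm (hud x))
  have cb1 : Continuous fun x => bform Γ1 Γ2 (u x) (u x) := bform_continuous huc huc
  have cb2 : Continuous fun x => bform Γ1 Γ2 (deriv u x) (u x) := bform_continuous hu'c huc
  have i1 : Integrable fun x => bform Γ1 Γ2 (u x) (u x) := by
    refine iu.mono' cb1.aestronglyMeasurable (.of_forall fun x => ?_)
    rw [Real.norm_eq_abs, pow_two]
    exact bform_abs hΓ1_herm hΓ2_herm hΓ1_sq hΓ2_sq _ _
  have i2 : Integrable fun x => bform Γ1 Γ2 (deriv u x) (u x) := by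
    refine (iu'.add iu).mono' cb2.aestronglyMeasurable (.of_forall fun x => ?_)
    rw [Real.norm_eq_abs]
    refine (bform_abs hΓ1_herm hΓ2_herm hΓ1_sq hΓ2_sq _ _).trans ?_
    simp only [Pi.add_apply]
    nlinarith [sq_nonneg (‖deriv u x‖ - ‖u x‖), sq_nonneg (‖deriv u x‖), sq_nonneg ‖u x‖]
  have hg'b : ∀ x, ‖deriv g x‖ ≤ Cg * Cb := fun x =>
    (hg' x).trans (mul_le_mul_of_nonneg_left (hg_bdd x) hCg.le)
  have j0 : Integrable fun x => g x * bform Γ1 Γ2 (u x) (u x) :=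
    i1.bdd_mul hgc.aestronglyMeasurable (.of_forall hg_bdd)
  have j1 : Integrable fun x => deriv g x * bform Γ1 Γ2 (u x) (u x) +
      g x * (2 * bform Γ1 Γ2 (deriv u x) (u x)) :=
    (i1.bdd_mul hg'c.aestronglyMeasurable (.of_forall hg'b)).add
      ((i2.const_mul 2).bdd_mul hgc.aestronglyMeasurable (.of_forall hg_bdd))
  have z := integral_eq_zero_of_hasDerivAt_of_integrable hder j1 j0
  have key := integral_mono ((iD.add (ig.const_mul (lam ^ 2))).add (j1.const_mul (2 * lam)))
    ((iH.add iu).const_mul (4 + 4 * Mf ^ 2 + Cg ^ 2))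
    (fun x => pointwise_est hΓ1_herm hΓ2_herm hΓ1_sq hΓ2_sq (u x) (deriv u x) (g x) (deriv g x)
      (f x) lam Cg Mf hlam0 (hg' x) (hf_bdd x))
  rw [integral_add' (iD.add (ig.const_mul (lam ^ 2))) (j1.const_mul (2 * lam)),
    integral_add' iD (ig.const_mul (lam ^ 2)), integral_const_mul, integral_const_mul, z,
    integral_const_mul, integral_add' iH iu] at key
  simpa using key
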